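/- arXiv:2203.09274 — 4 statements merged into one kernel-verified Lean document; each statement's English description precedes it below -/
import Mathlib

section
/- Let a ∈ ℝ, b ∈ ℝ\{0}, and k, m, n ∈ ℤ with n ≠ 0. Let f, g ∈ 𝒮(ℝ) be Schwartz functions and define F(t,x,y,z) = Σ_{ξ∈ℤ} f(x+ξ)·e^{2πi(kt + (m+nξ)y + nz)} and G(t,x,y,z) = Σ_{ξ∈ℤ} g(x+ξ)·e^{2πi(kt + (m+nξ)y + nz)}. Then the pair (F,G) satisfies −V̄₂(F) + V̄₁(G) + (b/4)G = 0 and V₁(F) + V₂(G) = 0 on ℝ⁴ if and only if (f,g) satisfies the ODE system d/dx (f,g)ᵀ = (A_n x + B_{k,m,n})(f,g)ᵀ on ℝ, where A_n = 2π·[[0, n],[n, 0]] and B_{k,m,n} = 2π·[[k, m − n(a−i)/b],[m − n(a+i)/b, (b/(4π))i − k]]. -/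
/-!
Each first-order operator acts on the Weil–Brezin series termwise, because Schwartz decay makes the
series and its termwise derivatives absolutely convergent, locally uniformly in `x`
(`schwartz_translate_bound`, `hasDerivAt_exp_series`, `hasDerivAt_x`). Since `∂_y + x ∂_z` multiplies
the `ξ`-th term by `2πi(m + n(x+ξ))`, the left-hand side of each equation becomes, up to the constant
factor `± i/2`, the series `Σ_ξ h(x+ξ) e^{2πi(kt + (m+nξ)y + nz)}`, where `h` is the defect in the
corresponding line of the ODE system. If `h = 0` the series vanishes. Conversely, if the series
vanishes for all `y`, then, as `n ≠ 0`, it is up to a unimodular factor an absolutely convergent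
Fourier series in `ny` with coefficients `h(x+ξ)`, so every coefficient is zero
(`coeff_eq_zero_of_series`); the coefficient `ξ = 0` gives `h(x) = 0`.
-/

open Complex MeasureTheory

noncomputable section

/-- Functions of four real variables `(t, x, y, z)` with complex values. -/
abbrev F4 : Type := ℝ → ℝ → ℝ → ℝ → ℂ

/-- Smoothness of a function of four real variables. -/
def Smooth4 (f : F4) : Prop :=
  ContDiff ℝ (⊤ : ℕ∞) (fun p : ℝ × ℝ × ℝ × ℝ => f p.1 p.2.1 p.2.2.1 p.2.2.2)

/-- The invariance properties identifying smooth functions on `ℝ⁴` with smooth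
functions on the Kodaira–Thurston manifold `KT⁴`. -/
def KTPeriodic (f : F4) : Prop :=
  ∀ t x y z : ℝ,
    f (t + 1) x y z = f t x y z ∧
    f t (x + 1) y (z + y) = f t x y z ∧
    f t x (y + 1) z = f t x y z ∧
    f t x y (z + 1) = f t x y z

/-- Partial derivative in `t`. -/
def pT (f : F4) (t x y z : ℝ) : ℂ := deriv (fun s => f s x y z) t
/-- Partial derivative in `x`. -/
def pX (f : F4) (t x y z : ℝ) : ℂ := deriv (fun s => f t s y z) x
/-- Partial derivative in `y`. -/
def pY (f : F4) (t x y z : ℝ) : ℂ := deriv (fun s => f t x s z) y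
/-- Partial derivative in `z`. -/
def pZ (f : F4) (t x y z : ℝ) : ℂ := deriv (fun s => f t x y s) z

/-- The vector field `V₁ = (1/2)(∂/∂t − i ∂/∂x)`. -/
def V₁ (f : F4) (t x y z : ℝ) : ℂ :=
  (1 / 2) * (pT f t x y z - Complex.I * pX f t x y z)

/-- The conjugate vector field `V̄₁ = (1/2)(∂/∂t + i ∂/∂x)`. -/
def V₁c (f : F4) (t x y z : ℝ) : ℂ :=
  (1 / 2) * (pT f t x y z + Complex.I * pX f t x y z)

/-- The vector field `V₂ = (1/2)(∂/∂y + x ∂/∂z − ((a−i)/b) ∂/∂z)`. -/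
def V₂ (a b : ℝ) (f : F4) (t x y z : ℝ) : ℂ :=
  (1 / 2) * (pY f t x y z + (x : ℂ) * pZ f t x y z -
    (((a : ℂ) - Complex.I) / (b : ℂ)) * pZ f t x y z)

/-- The conjugate vector field `V̄₂ = (1/2)(∂/∂y + x ∂/∂z − ((a+i)/b) ∂/∂z)`. -/
def V₂c (a b : ℝ) (f : F4) (t x y z : ℝ) : ℂ :=
  (1 / 2) * (pY f t x y z + (x : ℂ) * pZ f t x y z -
    (((a : ℂ) + Complex.I) / (b : ℂ)) * pZ f t x y z)

/-- The space `𝒮(a,b)` of pairs `(f,g)` of smooth KT-periodic functions satisfying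
`−V̄₂(f) + V̄₁(g) + (b/4)g = 0` and `V₁(f) + V₂(g) = 0`. -/
def Sol (a b : ℝ) : Set (F4 × F4) :=
  {fg | Smooth4 fg.1 ∧ Smooth4 fg.2 ∧ KTPeriodic fg.1 ∧ KTPeriodic fg.2 ∧
    (∀ t x y z : ℝ,
      -V₂c a b fg.1 t x y z + V₁c fg.2 t x y z + ((b : ℂ) / 4) * fg.2 t x y z = 0) ∧
    (∀ t x y z : ℝ, V₁ fg.1 t x y z + V₂ a b fg.2 t x y z = 0)}

/-- `S` is a `ℂ`-subspace of dimension exactly `n`: there are `n` linearly independent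
elements whose span is exactly `S`. -/
def HasDimOver {V : Type*} [AddCommGroup V] [Module ℂ V] (S : Set V) (n : ℕ) : Prop :=
  ∃ v : Fin n → V, LinearIndependent ℂ v ∧
    (Submodule.span ℂ (Set.range v) : Set V) = S

end

/-- The Weil–Brezin transform of a Schwartz function `f` with parameters `(k,m,n)`:
`F(t,x,y,z) = Σ_{ξ∈ℤ} f(x+ξ)·e^{2πi(kt + (m+nξ)y + nz)}`. -/
noncomputable def weilBrezin (f : SchwartzMap ℝ ℂ) (k m n : ℤ) : F4 :=
  fun t x y z => ∑' ξ : ℤ,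
    f (x + (ξ : ℝ)) *
      Complex.exp (2 * (Real.pi : ℂ) * Complex.I *
        ((k : ℂ) * (t : ℂ) + ((m : ℂ) + (n : ℂ) * (ξ : ℂ)) * (y : ℂ) + (n : ℂ) * (z : ℂ)))

/-- The character `e^{2πi(kt + (m+nξ)y + nz)}` occurring in the `ξ`-th term of the transform. -/
noncomputable def wbChar (k m n : ℤ) (t y z : ℝ) (ξ : ℤ) : ℂ :=
  Complex.exp (2 * (Real.pi : ℂ) * Complex.I *
    ((k : ℂ) * (t : ℂ) + ((m : ℂ) + (n : ℂ) * (ξ : ℂ)) * (y : ℂ) + (n : ℂ) * (z : ℂ)))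

lemma norm_wbChar (k m n : ℤ) (t y z : ℝ) (ξ : ℤ) : ‖wbChar k m n t y z ξ‖ = 1 := by
  have : wbChar k m n t y z ξ =
      Complex.exp (((2 * Real.pi * (k * t + (m + n * ξ) * y + n * z) : ℝ) : ℂ) * Complex.I) := by
    unfold wbChar
    congr 1
    push_cast
    ring
  rw [this, Complex.norm_exp_ofReal_mul_I]

lemma hasSum_of_terms_eq {u v : ℤ → ℂ} {w : ℂ} (h : ∀ ξ, u ξ = v ξ) (hv : HasSum v w) :
    HasSum u w := by
  rwa [funext h]

lemma summable_inv_one_add_sq : Summable (fun ξ : ℤ => (1 + (ξ : ℝ) ^ 2)⁻¹) := by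
  have h := Real.summable_one_div_int_pow (p := 2) |>.mpr (by norm_num)
  refine Summable.of_norm_bounded_eventually h ?_
  have h0 : ∀ᶠ ξ : ℤ in Filter.cofinite, ξ ≠ 0 :=
    (Set.finite_singleton (0 : ℤ)).eventually_cofinite_notMem
  filter_upwards [h0] with ξ hξ
  have : (0 : ℝ) < (ξ : ℝ) ^ 2 := by positivity
  rw [Real.norm_of_nonneg (by positivity), one_div]
  exact inv_anti₀ this (by linarith)

/-- Decay of the translates of a Schwartz function, locally uniform in `x`; the weight `1 + |ξ|`
is what differentiation in `y` requires. -/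
lemma schwartz_translate_bound (f : SchwartzMap ℝ ℂ) :
    ∃ C : ℝ, 0 ≤ C ∧ ∀ (x : ℝ) (ξ : ℤ),
      (1 + |(ξ : ℝ)|) * ‖f (x + ξ)‖ ≤ C * (1 + x ^ 2) ^ 2 * (1 + (ξ : ℝ) ^ 2)⁻¹ := by
  obtain ⟨C0, hC0, h0⟩ := f.decay 0 0
  obtain ⟨C4, hC4, h4⟩ := f.decay 4 0
  refine ⟨16 * (C0 + C4), by positivity, fun x ξ => ?_⟩
  have h0 := h0 (x + ξ)
  have h4 := h4 (x + ξ)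
  rw [norm_iteratedFDeriv_zero] at h0 h4
  have e4 : ‖x + (ξ : ℝ)‖ ^ 4 = (x + ξ) ^ 4 := by
    rw [Real.norm_eq_abs]; exact Even.pow_abs (by decide) _
  rw [e4] at h4
  rw [pow_zero, one_mul] at h0
  rw [← div_eq_mul_inv, le_div_iff₀ (by positivity)]
  set u : ℝ := (ξ : ℝ)
  set N := ‖f (x + u)‖
  have hN : 0 ≤ N := norm_nonneg _
  -- Peetre's inequality
  have p1 : 1 + u ^ 2 ≤ 2 * ((1 + x ^ 2) * (1 + (x + u) ^ 2)) := by
    nlinarith [sq_nonneg (2 * x + u), sq_nonneg (x * (x + u))]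
  have p2 : (1 + u ^ 2) ^ 2 ≤ (2 * ((1 + x ^ 2) * (1 + (x + u) ^ 2))) ^ 2 := by gcongr
  have p3 : (1 + (x + u) ^ 2) ^ 2 ≤ 2 * (1 + (x + u) ^ 4) := by
    nlinarith [sq_nonneg ((x + u) ^ 2 - 1)]
  have p4 : 1 + |u| ≤ 2 * (1 + u ^ 2) := by
    nlinarith [sq_nonneg (|u| - 1), sq_abs u]
  calc (1 + |u|) * N * (1 + u ^ 2) ≤ (2 * (1 + u ^ 2)) * N * (1 + u ^ 2) := by gcongr
    _ = 2 * N * (1 + u ^ 2) ^ 2 := by ring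
    _ ≤ 2 * N * (2 * ((1 + x ^ 2) * (1 + (x + u) ^ 2))) ^ 2 := by gcongr
    _ = 8 * N * (1 + x ^ 2) ^ 2 * (1 + (x + u) ^ 2) ^ 2 := by ring
    _ ≤ 8 * N * (1 + x ^ 2) ^ 2 * (2 * (1 + (x + u) ^ 4)) := by gcongr
    _ = 16 * (N + (x + u) ^ 4 * N) * (1 + x ^ 2) ^ 2 := by ring
    _ ≤ 16 * (C0 + C4) * (1 + x ^ 2) ^ 2 := by gcongr

lemma summable_weighted (f : SchwartzMap ℝ ℂ) (x : ℝ) :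
    Summable (fun ξ : ℤ => (1 + |(ξ : ℝ)|) * ‖f (x + ξ)‖) := by
  obtain ⟨C, -, h⟩ := schwartz_translate_bound f
  exact Summable.of_nonneg_of_le (fun ξ => by positivity) (h x)
    (summable_inv_one_add_sq.mul_left _)

lemma summable_translate_norm (f : SchwartzMap ℝ ℂ) (x : ℝ) :
    Summable (fun ξ : ℤ => ‖f (x + ξ)‖) := by
  refine Summable.of_nonneg_of_le (fun ξ => norm_nonneg _) (fun ξ => ?_) (summable_weighted f x)
  nlinarith [norm_nonneg (f (x + ξ)), abs_nonneg (ξ : ℝ)]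

lemma summable_wb (f : SchwartzMap ℝ ℂ) (k m n : ℤ) (t x y z : ℝ) :
    Summable (fun ξ : ℤ => f (x + ξ) * wbChar k m n t y z ξ) := by
  refine Summable.of_norm ?_
  simpa [norm_mul, norm_wbChar] using summable_translate_norm f x

lemma hasSum_wb (f : SchwartzMap ℝ ℂ) (k m n : ℤ) (t x y z : ℝ) :
    HasSum (fun ξ : ℤ => f (x + ξ) * wbChar k m n t y z ξ) (weilBrezin f k m n t x y z) :=
  (summable_wb f k m n t x y z).hasSum

/-- Termwise differentiation of a series of functions `s ↦ c_ξ e_ξ(s)` with `e_ξ` unimodular and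
`e_ξ' = l_ξ e_ξ`. -/
lemma hasDerivAt_exp_series (c : ℤ → ℂ) (e : ℤ → ℝ → ℂ) (l : ℤ → ℂ)
    (hc : Summable (fun ξ => ‖c ξ‖)) (hl : Summable (fun ξ => ‖l ξ * c ξ‖))
    (he : ∀ ξ s, ‖e ξ s‖ = 1) (hd : ∀ ξ s, HasDerivAt (e ξ) (l ξ * e ξ s) s) (s : ℝ) :
    HasSum (fun ξ => l ξ * (c ξ * e ξ s)) (deriv (fun s => ∑' ξ, c ξ * e ξ s) s) := by
  have hs : Summable (fun ξ => l ξ * (c ξ * e ξ s)) := by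
    refine Summable.of_norm (hl.congr fun ξ => ?_)
    rw [← mul_assoc, norm_mul (l ξ * c ξ), he, mul_one]
  have h := hasDerivAt_tsum (g := fun ξ s => c ξ * e ξ s) (g' := fun ξ s => l ξ * (c ξ * e ξ s))
    hl (fun ξ s => ((hd ξ s).const_mul (c ξ)).congr_deriv (by ring))
    (fun ξ s => by rw [← mul_assoc, norm_mul (l ξ * c ξ), he, mul_one]) (y₀ := s)
    (Summable.of_norm (hc.congr fun ξ => by rw [norm_mul, he, mul_one])) s
  rw [h.deriv]
  exact hs.hasSum

lemma hasSum_pT (f : SchwartzMap ℝ ℂ) (k m n : ℤ) (t x y z : ℝ) :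
    HasSum (fun ξ : ℤ => (2 * (Real.pi : ℂ) * Complex.I * k) *
      (f (x + ξ) * wbChar k m n t y z ξ)) (pT (weilBrezin f k m n) t x y z) := by
  refine hasDerivAt_exp_series (fun ξ => f (x + ξ)) (fun ξ s => wbChar k m n s y z ξ)
    (fun _ => 2 * (Real.pi : ℂ) * Complex.I * k) (summable_translate_norm f x) ?_
    (fun ξ s => norm_wbChar ..) (fun ξ s => ?_) t
  · simpa only [norm_mul] using (summable_translate_norm f x).mul_left _
  · have h0 : HasDerivAt (fun s : ℝ => (s : ℂ)) 1 s := Complex.ofRealCLM.hasDerivAt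
    have := (((((h0.const_mul (k : ℂ)).add_const (((m : ℂ) + n * ξ) * y)).add_const
      ((n : ℂ) * z)).const_mul (2 * (Real.pi : ℂ) * Complex.I))).cexp
    refine this.congr_deriv ?_
    unfold wbChar
    ring

lemma hasSum_pZ (f : SchwartzMap ℝ ℂ) (k m n : ℤ) (t x y z : ℝ) :
    HasSum (fun ξ : ℤ => (2 * (Real.pi : ℂ) * Complex.I * n) *
      (f (x + ξ) * wbChar k m n t y z ξ)) (pZ (weilBrezin f k m n) t x y z) := by
  refine hasDerivAt_exp_series (fun ξ => f (x + ξ)) (fun ξ s => wbChar k m n t y s ξ)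
    (fun _ => 2 * (Real.pi : ℂ) * Complex.I * n) (summable_translate_norm f x) ?_
    (fun ξ s => norm_wbChar ..) (fun ξ s => ?_) z
  · simpa only [norm_mul] using (summable_translate_norm f x).mul_left _
  · have h0 : HasDerivAt (fun s : ℝ => (s : ℂ)) 1 s := Complex.ofRealCLM.hasDerivAt
    have := ((((h0.const_mul (n : ℂ)).const_add ((k : ℂ) * t + ((m : ℂ) + n * ξ) * y))).const_mul
      (2 * (Real.pi : ℂ) * Complex.I)).cexp
    refine this.congr_deriv ?_
    unfold wbChar
    ring

lemma hasSum_pY (f : SchwartzMap ℝ ℂ) (k m n : ℤ) (t x y z : ℝ) :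
    HasSum (fun ξ : ℤ => (2 * (Real.pi : ℂ) * Complex.I * (m + n * ξ)) *
      (f (x + ξ) * wbChar k m n t y z ξ)) (pY (weilBrezin f k m n) t x y z) := by
  refine hasDerivAt_exp_series (fun ξ => f (x + ξ)) (fun ξ s => wbChar k m n t s z ξ)
    (fun ξ => 2 * (Real.pi : ℂ) * Complex.I * (m + n * ξ)) (summable_translate_norm f x) ?_
    (fun ξ s => norm_wbChar ..) (fun ξ s => ?_) y
  · refine Summable.of_nonneg_of_le (fun ξ => norm_nonneg _) (fun ξ => ?_)
      ((summable_weighted f x).mul_left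
        (‖2 * (Real.pi : ℂ) * Complex.I‖ * (‖(m : ℂ)‖ + ‖(n : ℂ)‖)))
    have h1 : ‖(m : ℂ) + n * ξ‖ ≤ (‖(m : ℂ)‖ + ‖(n : ℂ)‖) * (1 + |(ξ : ℝ)|) := by
      refine (norm_add_le _ _).trans ?_
      have : ‖(ξ : ℂ)‖ = |(ξ : ℝ)| := Complex.norm_intCast ξ
      rw [norm_mul, this]
      nlinarith [norm_nonneg (m : ℂ), norm_nonneg (n : ℂ), abs_nonneg (ξ : ℝ),
        mul_nonneg (norm_nonneg (m : ℂ)) (abs_nonneg (ξ : ℝ))]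
    rw [norm_mul, norm_mul (2 * (Real.pi : ℂ) * Complex.I)]
    calc _ ≤ ‖2 * (Real.pi : ℂ) * Complex.I‖ * ((‖(m : ℂ)‖ + ‖(n : ℂ)‖) * (1 + |(ξ : ℝ)|))
          * ‖f (x + ξ)‖ := by gcongr
      _ = _ := by ring
  · have h0 : HasDerivAt (fun s : ℝ => (s : ℂ)) 1 s := Complex.ofRealCLM.hasDerivAt
    have := (((((h0.const_mul ((m : ℂ) + n * ξ)).const_add ((k : ℂ) * t)).add_const
      ((n : ℂ) * z)).const_mul (2 * (Real.pi : ℂ) * Complex.I))).cexp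
    refine this.congr_deriv ?_
    unfold wbChar
    ring

/-- Differentiation in `x` is termwise: the derivatives have a summable majorant on the ball of radius `1`
around `x`. -/
lemma hasDerivAt_x (f : SchwartzMap ℝ ℂ) (k m n : ℤ) (t x y z : ℝ) :
    HasDerivAt (fun s => weilBrezin f k m n t s y z)
      (∑' ξ : ℤ, deriv f (x + ξ) * wbChar k m n t y z ξ) x := by
  obtain ⟨C, hC, h⟩ := schwartz_translate_bound (SchwartzMap.derivCLM ℝ ℂ f)
  refine hasDerivAt_tsum_of_isPreconnected (t := Metric.ball x 1) (y₀ := x) (y := x)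
    (u := fun ξ : ℤ => C * (1 + (|x| + 1) ^ 2) ^ 2 * (1 + (ξ : ℝ) ^ 2)⁻¹)
    (g := fun (ξ : ℤ) s => f (s + ξ) * wbChar k m n t y z ξ)
    (g' := fun (ξ : ℤ) s => deriv f (s + ξ) * wbChar k m n t y z ξ)
    (summable_inv_one_add_sq.mul_left _) Metric.isOpen_ball
    (convex_ball x 1).isPreconnected (fun ξ s _ => ?_) (fun ξ s hs => ?_)
    (Metric.mem_ball_self one_pos) (summable_wb f k m n t x y z) (Metric.mem_ball_self one_pos)
  · exact ((f.differentiableAt.hasDerivAt).comp_add_const s (ξ : ℝ)).mul_const _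
  · rw [norm_mul, norm_wbChar, mul_one]
    have h1 := h s ξ
    rw [SchwartzMap.derivCLM_apply] at h1
    have h2 : |s| ≤ |x| + 1 := by
      rw [Metric.mem_ball, Real.dist_eq] at hs
      have := abs_add_le (s - x) x
      rw [sub_add_cancel] at this
      linarith
    have h3 : s ^ 2 ≤ (|x| + 1) ^ 2 := by
      rw [← sq_abs s]
      gcongr
    calc ‖deriv f (s + ξ)‖ ≤ (1 + |(ξ : ℝ)|) * ‖deriv f (s + ξ)‖ := by
          nlinarith [norm_nonneg (deriv f (s + ξ)), abs_nonneg (ξ : ℝ)]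
      _ ≤ _ := h1
      _ ≤ _ := by gcongr

lemma hasSum_pX (f : SchwartzMap ℝ ℂ) (k m n : ℤ) (t x y z : ℝ) :
    HasSum (fun ξ : ℤ => deriv f (x + ξ) * wbChar k m n t y z ξ)
      (pX (weilBrezin f k m n) t x y z) := by
  unfold pX
  rw [(hasDerivAt_x f k m n t x y z).deriv]
  exact (summable_wb (SchwartzMap.derivCLM ℝ ℂ f) k m n t x y z).hasSum

/-- Uniqueness of the coefficients of an absolutely convergent Fourier series. The sum converges in
`C(ℝ/ℤ)`, hence in `L²`, where the monomials are orthonormal. -/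
lemma fourier_coeff_eq_zero (c : ℤ → ℂ) (hc : Summable (fun ξ => ‖c ξ‖))
    (h : ∀ s : ℝ, ∑' ξ : ℤ, c ξ * Complex.exp (2 * (Real.pi : ℂ) * Complex.I * ξ * s) = 0)
    (j : ℤ) : c j = 0 := by
  have hs : Summable (fun ξ => c ξ • (fourier ξ : C(AddCircle (1 : ℝ), ℂ))) := by
    refine Summable.of_norm (hc.congr fun ξ => ?_)
    rw [norm_smul, fourier_norm, mul_one]
  have h0 : ∑' ξ, c ξ • (fourier ξ : C(AddCircle (1 : ℝ), ℂ)) = 0 := by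
    ext q
    induction q using QuotientAddGroup.induction_on with
    | H s =>
      rw [← ContinuousMap.tsum_apply hs]
      refine Eq.trans (tsum_congr fun ξ => ?_) (h s)
      rw [ContinuousMap.smul_apply, smul_eq_mul]
      erw [fourier_coe_apply]
      simp
  have h1 := hs.hasSum
  rw [h0] at h1
  have h2 := h1.mapL (ContinuousMap.toLp 2 (AddCircle.haarAddCircle (T := (1 : ℝ))) ℂ)
  have h3 := h2.mapL (innerSL ℂ (fourierLp (T := (1 : ℝ)) 2 j))
  rw [map_zero, map_zero] at h3
  have orth := orthonormal_iff_ite.mp (orthonormal_fourier (T := (1 : ℝ)))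
  have h4 : HasSum (fun ξ : ℤ => c ξ * if j = ξ then (1 : ℂ) else 0) 0 := by
    refine hasSum_of_terms_eq (fun ξ => ?_) h3
    rw [← orth j ξ, map_smul, map_smul, smul_eq_mul]
    rfl
  have h5 := hasSum_single (f := fun ξ : ℤ => c ξ * if j = ξ then (1 : ℂ) else 0) j
    (fun ξ hξ => by simp [Ne.symm hξ])
  simpa using h5.unique h4

/-- A Weil–Brezin type series with `n ≠ 0` that vanishes for all `y` has zero coefficients. -/
lemma coeff_eq_zero_of_series (c : ℤ → ℂ) (k m n : ℤ) (hn : n ≠ 0)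
    (h : ∀ y : ℝ, HasSum (fun ξ => c ξ * wbChar k m n 0 y 0 ξ) 0) (j : ℤ) : c j = 0 := by
  have hn' : (n : ℂ) ≠ 0 := by exact_mod_cast hn
  refine fourier_coeff_eq_zero c ?_ (fun s => ?_) j
  · have := (h 0).summable.norm
    simpa [norm_mul, norm_wbChar] using this
  · -- take `y = s / n` and strip the common factor `e^{2πi m s / n}`
    have h1 := (h (s / n)).mul_left (Complex.exp (-(2 * (Real.pi : ℂ) * Complex.I * (m * (s / n)))))
    rw [mul_zero] at h1
    rw [← h1.tsum_eq]
    refine tsum_congr fun ξ => ?_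
    rw [mul_left_comm]
    unfold wbChar
    rw [← Complex.exp_add]
    congr 2
    push_cast
    field_simp
    ring

/-- Holt–Zhang: the Weil–Brezin transforms `(F,G)` of Schwartz
functions `(f,g)` satisfy the harmonic `(0,1)`-form equations
`−V̄₂(F) + V̄₁(G) + (b/4)G = 0`, `V₁(F) + V₂(G) = 0` if and only if `(f,g)` satisfies the
ODE system `(f,g)′ = (A_n x + B_{k,m,n})(f,g)` with `A_n = 2π[[0,n],[n,0]]` and
`B_{k,m,n} = 2π[[k, m−n(a−i)/b],[m−n(a+i)/b, (b/4π)i − k]]`. -/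
theorem weilBrezin_harmonic_iff_ode
    (a : ℝ) (b : ℝ) (hb : b ≠ 0) (k m n : ℤ) (hn : n ≠ 0)
    (f g : SchwartzMap ℝ ℂ) :
    (let F := weilBrezin f k m n
     let G := weilBrezin g k m n
     (∀ t x y z : ℝ,
        -V₂c a b F t x y z + V₁c G t x y z + ((b : ℂ) / 4) * G t x y z = 0) ∧
     (∀ t x y z : ℝ, V₁ F t x y z + V₂ a b G t x y z = 0)) ↔
    (∀ x : ℝ,
      HasDerivAt (⇑f)
        ((2 * (Real.pi : ℂ) * (k : ℂ)) * f x +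
          (2 * (Real.pi : ℂ) * (n : ℂ) * (x : ℂ) +
            2 * (Real.pi : ℂ) * ((m : ℂ) - (n : ℂ) * ((a : ℂ) - Complex.I) / (b : ℂ))) * g x) x ∧
      HasDerivAt (⇑g)
        ((2 * (Real.pi : ℂ) * (n : ℂ) * (x : ℂ) +
            2 * (Real.pi : ℂ) * ((m : ℂ) - (n : ℂ) * ((a : ℂ) + Complex.I) / (b : ℂ))) * f x +
          (2 * (Real.pi : ℂ) * (((b : ℂ) / (4 * (Real.pi : ℂ))) * Complex.I - (k : ℂ))) * g x) x) := by
  have hb' : (b : ℂ) ≠ 0 := by exact_mod_cast hb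
  have hpi : (Real.pi : ℂ) ≠ 0 := by exact_mod_cast Real.pi_ne_zero
  -- the defects in the two lines of the ODE system
  set hf : ℝ → ℂ := fun x => deriv f x - ((2 * (Real.pi : ℂ) * (k : ℂ)) * f x +
    (2 * (Real.pi : ℂ) * (n : ℂ) * (x : ℂ) +
      2 * (Real.pi : ℂ) * ((m : ℂ) - (n : ℂ) * ((a : ℂ) - Complex.I) / (b : ℂ))) * g x) with hf_def
  set hg : ℝ → ℂ := fun x => deriv g x - ((2 * (Real.pi : ℂ) * (n : ℂ) * (x : ℂ) +
      2 * (Real.pi : ℂ) * ((m : ℂ) - (n : ℂ) * ((a : ℂ) + Complex.I) / (b : ℂ))) * f x +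
    (2 * (Real.pi : ℂ) * (((b : ℂ) / (4 * (Real.pi : ℂ))) * Complex.I - (k : ℂ))) * g x)
    with hg_def
  have S1 : ∀ t x y z : ℝ, HasSum
      (fun ξ : ℤ => (Complex.I / 2 * hg (x + ξ)) * wbChar k m n t y z ξ)
      (-V₂c a b (weilBrezin f k m n) t x y z + V₁c (weilBrezin g k m n) t x y z +
        ((b : ℂ) / 4) * weilBrezin g k m n t x y z) := by
    intro t x y z
    have hV₂ := (((hasSum_pY f k m n t x y z).add
      ((hasSum_pZ f k m n t x y z).mul_left (x : ℂ))).sub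
      ((hasSum_pZ f k m n t x y z).mul_left (((a : ℂ) + Complex.I) / (b : ℂ)))).mul_left (1 / 2 : ℂ)
    have hV₁ := ((hasSum_pT g k m n t x y z).add
      ((hasSum_pX g k m n t x y z).mul_left Complex.I)).mul_left (1 / 2 : ℂ)
    refine hasSum_of_terms_eq (fun ξ => ?_)
      ((hV₂.neg.add hV₁).add ((hasSum_wb g k m n t x y z).mul_left ((b : ℂ) / 4)))
    simp only [hg_def]
    push_cast
    field_simp
    ring_nf
    simp only [Complex.I_sq]
    ring
  have S2 : ∀ t x y z : ℝ, HasSum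
      (fun ξ : ℤ => (-Complex.I / 2 * hf (x + ξ)) * wbChar k m n t y z ξ)
      (V₁ (weilBrezin f k m n) t x y z + V₂ a b (weilBrezin g k m n) t x y z) := by
    intro t x y z
    have hV₂ := (((hasSum_pY g k m n t x y z).add
      ((hasSum_pZ g k m n t x y z).mul_left (x : ℂ))).sub
      ((hasSum_pZ g k m n t x y z).mul_left (((a : ℂ) - Complex.I) / (b : ℂ)))).mul_left (1 / 2 : ℂ)
    have hV₁ := ((hasSum_pT f k m n t x y z).sub
      ((hasSum_pX f k m n t x y z).mul_left Complex.I)).mul_left (1 / 2 : ℂ)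
    refine hasSum_of_terms_eq (fun ξ => ?_) (hV₁.add hV₂)
    simp only [hf_def]
    push_cast
    field_simp
    ring
  constructor
  · rintro ⟨E1, E2⟩ x
    have z1 := coeff_eq_zero_of_series (fun ξ : ℤ => Complex.I / 2 * hg (x + ξ)) k m n hn
      (fun y => by have := S1 0 x y 0; rwa [E1] at this) 0
    have z2 := coeff_eq_zero_of_series (fun ξ : ℤ => -Complex.I / 2 * hf (x + ξ)) k m n hn
      (fun y => by have := S2 0 x y 0; rwa [E2] at this) 0
    have z1' : hg x = 0 := by simpa using z1
    have z2' : hf x = 0 := by simpa using z2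
    exact ⟨f.differentiableAt.hasDerivAt.congr_deriv (sub_eq_zero.mp z2'),
      g.differentiableAt.hasDerivAt.congr_deriv (sub_eq_zero.mp z1')⟩
  · intro H
    have z2 : ∀ x, hf x = 0 := fun x => sub_eq_zero.mpr (H x).1.deriv
    have z1 : ∀ x, hg x = 0 := fun x => sub_eq_zero.mpr (H x).2.deriv
    refine ⟨fun t x y z => ?_, fun t x y z => ?_⟩
    · refine (S1 t x y z).unique ?_
      simp only [z1, mul_zero, zero_mul]
      exact hasSum_zero
    · refine (S2 t x y z).unique ?_
      simp only [z2, mul_zero, zero_mul]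
      exact hasSum_zero
end

section
/- Let f : ℝ⁴ → ℂ be a smooth KT-periodic function and let k, m, n ∈ ℤ with n ≠ 0. Then the function f_{k,m,n} : ℝ → ℂ defined by f_{k,m,n}(x) = ∫_0^1 ∫_0^1 ∫_0^1 f(t,x,y,z)·e^{−2πi(kt + my + nz)} dt dy dz is a Schwartz function on ℝ. -/
/-!
The vector fields `∂/∂x` and `W = ∂/∂y + x ∂/∂z` descend to `KT⁴`, so they preserve smooth
KT-periodic functions (`KTPeriodic.pX`, `KTPeriodic.pW`). On partial Fourier coefficients they act
as differentiation (`hasDerivAt_coeff`, by differentiation under the integral) and as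
multiplication by `2πi(m + nx)` (`coeff_pW`, by integration by parts in `y` and `z`):
`(∂f/∂x)_{k,m,n} = (f_{k,m,n})'` and `(W f)_{k,m,n}(x) = 2πi(m + nx) f_{k,m,n}(x)`.

A smooth KT-periodic function is bounded, because `KT⁴` is compact (`KTPeriodic.exists_bound`);
hence so are its coefficients. Applying this to `W^p (∂/∂x)^j f` shows that
`(m + nx)^p` times the `j`-th derivative of `f_{k,m,n}` is bounded for all `p` and `j`. As `n ≠ 0`,
`|x| ≤ |m + nx| + |m|`, and the Schwartz estimates follow (`exists_decay_coeff`).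
-/

open Complex MeasureTheory

/-! ### Smooth functions of four variables -/

lemma Smooth4.comp_continuous {f : F4} (hf : Smooth4 f) {X : Type*} [TopologicalSpace X]
    {a b c d : X → ℝ} (ha : Continuous a) (hb : Continuous b) (hc : Continuous c)
    (hd : Continuous d) : Continuous fun s => f (a s) (b s) (c s) (d s) :=
  hf.continuous.comp (ha.prodMk (hb.prodMk (hc.prodMk hd)))

lemma Smooth4.differentiable {f : F4} (hf : Smooth4 f) :
    Differentiable ℝ (fun p : ℝ × ℝ × ℝ × ℝ => f p.1 p.2.1 p.2.2.1 p.2.2.2) :=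
  ContDiff.differentiable hf (by simp)

/-- The chain rule along a curve `(a, b, c, d)` in `ℝ⁴`. -/
lemma Smooth4.hasDerivAt_comp {f : F4} (hf : Smooth4 f) {a b c d : ℝ → ℝ} {a' b' c' d' s : ℝ}
    (ha : HasDerivAt a a' s) (hb : HasDerivAt b b' s) (hc : HasDerivAt c c' s)
    (hd : HasDerivAt d d' s) :
    HasDerivAt (fun s => f (a s) (b s) (c s) (d s))
      (fderiv ℝ (fun p : ℝ × ℝ × ℝ × ℝ => f p.1 p.2.1 p.2.2.1 p.2.2.2)
        (a s, b s, c s, d s) (a', b', c', d')) s := by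
  have h := (hf.differentiable (a s, b s, c s, d s)).hasFDerivAt
  exact h.comp_hasDerivAt (f := fun s => (a s, b s, c s, d s)) s
    (ha.prodMk (hb.prodMk (hc.prodMk hd)))

lemma Smooth4.pX_eq {f : F4} (hf : Smooth4 f) (t x y z : ℝ) : pX f t x y z =
    fderiv ℝ (fun p : ℝ × ℝ × ℝ × ℝ => f p.1 p.2.1 p.2.2.1 p.2.2.2) (t, x, y, z) (0, 1, 0, 0) :=
  (hf.hasDerivAt_comp (hasDerivAt_const x t) (hasDerivAt_id x) (hasDerivAt_const x y)
    (hasDerivAt_const x z)).deriv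

lemma Smooth4.pY_eq {f : F4} (hf : Smooth4 f) (t x y z : ℝ) : pY f t x y z =
    fderiv ℝ (fun p : ℝ × ℝ × ℝ × ℝ => f p.1 p.2.1 p.2.2.1 p.2.2.2) (t, x, y, z) (0, 0, 1, 0) :=
  (hf.hasDerivAt_comp (hasDerivAt_const y t) (hasDerivAt_const y x) (hasDerivAt_id y)
    (hasDerivAt_const y z)).deriv

lemma Smooth4.pZ_eq {f : F4} (hf : Smooth4 f) (t x y z : ℝ) : pZ f t x y z =
    fderiv ℝ (fun p : ℝ × ℝ × ℝ × ℝ => f p.1 p.2.1 p.2.2.1 p.2.2.2) (t, x, y, z) (0, 0, 0, 1) :=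
  (hf.hasDerivAt_comp (hasDerivAt_const z t) (hasDerivAt_const z x) (hasDerivAt_const z y)
    (hasDerivAt_id z)).deriv

lemma Smooth4.hasDerivAt_pX {f : F4} (hf : Smooth4 f) (t x y z : ℝ) :
    HasDerivAt (fun s => f t s y z) (pX f t x y z) x := by
  rw [hf.pX_eq]
  exact hf.hasDerivAt_comp (hasDerivAt_const x t) (hasDerivAt_id x) (hasDerivAt_const x y)
    (hasDerivAt_const x z)

lemma Smooth4.hasDerivAt_pY {f : F4} (hf : Smooth4 f) (t x y z : ℝ) :
    HasDerivAt (fun s => f t x s z) (pY f t x y z) y := by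
  rw [hf.pY_eq]
  exact hf.hasDerivAt_comp (hasDerivAt_const y t) (hasDerivAt_const y x) (hasDerivAt_id y)
    (hasDerivAt_const y z)

lemma Smooth4.hasDerivAt_pZ {f : F4} (hf : Smooth4 f) (t x y z : ℝ) :
    HasDerivAt (fun s => f t x y s) (pZ f t x y z) z := by
  rw [hf.pZ_eq]
  exact hf.hasDerivAt_comp (hasDerivAt_const z t) (hasDerivAt_const z x) (hasDerivAt_const z y)
    (hasDerivAt_id z)

lemma Smooth4.fderiv_apply {f : F4} (hf : Smooth4 f) (v : ℝ × ℝ × ℝ × ℝ) :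
    ContDiff ℝ (⊤ : ℕ∞) fun q : ℝ × ℝ × ℝ × ℝ =>
      fderiv ℝ (fun p : ℝ × ℝ × ℝ × ℝ => f p.1 p.2.1 p.2.2.1 p.2.2.2) q v :=
  (ContDiff.fderiv_right hf (m := (⊤ : ℕ∞)) (by simp)).clm_apply contDiff_const

lemma Smooth4.pX {f : F4} (hf : Smooth4 f) : Smooth4 (pX f) := by
  simpa only [Smooth4, hf.pX_eq] using! hf.fderiv_apply (0, 1, 0, 0)

lemma Smooth4.pY {f : F4} (hf : Smooth4 f) : Smooth4 (pY f) := by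
  simpa only [Smooth4, hf.pY_eq] using! hf.fderiv_apply (0, 0, 1, 0)

lemma Smooth4.pZ {f : F4} (hf : Smooth4 f) : Smooth4 (pZ f) := by
  simpa only [Smooth4, hf.pZ_eq] using! hf.fderiv_apply (0, 0, 0, 1)

lemma Smooth4.add {f g : F4} (hf : Smooth4 f) (hg : Smooth4 g) :
    Smooth4 fun t x y z => f t x y z + g t x y z :=
  ContDiff.add hf hg

lemma Smooth4.mul {f g : F4} (hf : Smooth4 f) (hg : Smooth4 g) :
    Smooth4 fun t x y z => f t x y z * g t x y z :=
  ContDiff.mul hf hg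

lemma smooth4_const (c : ℂ) : Smooth4 fun _ _ _ _ => c := contDiff_const

lemma smooth4_x : Smooth4 fun _ x _ _ => (x : ℂ) :=
  Complex.ofRealCLM.contDiff.comp (contDiff_fst.comp contDiff_snd)

/-! ### Triple integrals over the unit cube in `(t, y, z)` -/

/-- The integral of `f` over the unit cube in the variables `(t, y, z)`, as a function of `x`. -/
noncomputable def cubeInt (f : F4) (x : ℝ) : ℂ :=
  ∫ t in (0:ℝ)..1, ∫ y in (0:ℝ)..1, ∫ z in (0:ℝ)..1, f t x y z

/-- Differentiation under the integral sign; joint continuity of the derivative gives a constant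
dominating function near each point. -/
lemma hasDerivAt_integral_unit {u u' : ℝ → ℝ → ℂ} (hu : Continuous fun p : ℝ × ℝ => u p.1 p.2)
    (hu' : Continuous fun p : ℝ × ℝ => u' p.1 p.2)
    (h : ∀ x s, HasDerivAt (fun x => u x s) (u' x s) x) (x : ℝ) :
    HasDerivAt (fun x => ∫ s in (0:ℝ)..1, u x s) (∫ s in (0:ℝ)..1, u' x s) x := by
  obtain ⟨C, hC⟩ := ((isCompact_closedBall x 1).prod (isCompact_Icc (a := (0:ℝ)) (b := 1))
    ).exists_bound_of_continuousOn hu'.continuousOn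
  have hu1 : ∀ x, Continuous (u x) := fun x => hu.comp (by fun_prop : Continuous fun s => (x, s))
  have hu1' : ∀ x, Continuous (u' x) := fun x => hu'.comp (by fun_prop : Continuous fun s => (x, s))
  refine (intervalIntegral.hasDerivAt_integral_of_dominated_loc_of_deriv_le
    (bound := fun _ => C) (Metric.closedBall_mem_nhds x one_pos)
    (Filter.Eventually.of_forall fun x => (hu1 x).aestronglyMeasurable)
    ((hu1 x).intervalIntegrable _ _) (hu1' x).aestronglyMeasurable ?_ (by simp) ?_).2
  · refine Filter.Eventually.of_forall fun s hs x' hx' => hC (x', s) ⟨hx', ?_⟩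
    rw [Set.uIoc_of_le zero_le_one] at hs
    exact Set.Ioc_subset_Icc_self hs
  · exact Filter.Eventually.of_forall fun s _ x' _ => h x' s



lemma Smooth4.continuous_integral_z {f : F4} (hf : Smooth4 f) {X : Type*} [TopologicalSpace X]
    [FirstCountableTopology X] [LocallyCompactSpace X]
    {a b c : X → ℝ} (ha : Continuous a) (hb : Continuous b) (hc : Continuous c) :
    Continuous fun s => ∫ z in (0:ℝ)..1, f (a s) (b s) (c s) z :=
  intervalIntegral.continuous_parametric_intervalIntegral_of_continuous'
    (f := fun s z => f (a s) (b s) (c s) z)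
    (hf.comp_continuous (ha.comp continuous_fst) (hb.comp continuous_fst)
      (hc.comp continuous_fst) continuous_snd) _ _

lemma Smooth4.continuous_integral_yz {f : F4} (hf : Smooth4 f) {X : Type*} [TopologicalSpace X]
    [FirstCountableTopology X] [LocallyCompactSpace X]
    {a b : X → ℝ} (ha : Continuous a) (hb : Continuous b) :
    Continuous fun s => ∫ y in (0:ℝ)..1, ∫ z in (0:ℝ)..1, f (a s) (b s) y z :=
  intervalIntegral.continuous_parametric_intervalIntegral_of_continuous'
    (f := fun s y => ∫ z in (0:ℝ)..1, f (a s) (b s) y z)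
    (hf.continuous_integral_z (ha.comp continuous_fst) (hb.comp continuous_fst)
      continuous_snd) _ _


lemma Smooth4.hasDerivAt_cubeInt {f : F4} (hf : Smooth4 f) (x : ℝ) :
    HasDerivAt (cubeInt f) (cubeInt (_root_.pX f) x) x := by
  refine hasDerivAt_integral_unit
    (u := fun x t => ∫ y in (0:ℝ)..1, ∫ z in (0:ℝ)..1, f t x y z)
    (u' := fun x t => ∫ y in (0:ℝ)..1, ∫ z in (0:ℝ)..1, _root_.pX f t x y z)
    (hf.continuous_integral_yz continuous_snd continuous_fst)
    (hf.pX.continuous_integral_yz continuous_snd continuous_fst) (fun x t => ?_) x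
  refine hasDerivAt_integral_unit
    (u := fun x y => ∫ z in (0:ℝ)..1, f t x y z)
    (u' := fun x y => ∫ z in (0:ℝ)..1, _root_.pX f t x y z)
    (hf.continuous_integral_z continuous_const continuous_fst continuous_snd)
    (hf.pX.continuous_integral_z continuous_const continuous_fst continuous_snd) (fun x y => ?_) x
  exact hasDerivAt_integral_unit (u := fun x z => f t x y z)
    (u' := fun x z => _root_.pX f t x y z)
    (hf.comp_continuous continuous_const continuous_fst continuous_const continuous_snd)
    (hf.pX.comp_continuous continuous_const continuous_fst continuous_const continuous_snd)
    (fun x z => hf.hasDerivAt_pX t x y z) x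

lemma Smooth4.cubeInt_add {f g : F4} (hf : Smooth4 f) (hg : Smooth4 g) (x : ℝ) :
    cubeInt (fun t x y z => f t x y z + g t x y z) x = cubeInt f x + cubeInt g x := by
  have h1 : ∀ {h : F4}, Smooth4 h → ∀ t y,
      IntervalIntegrable (fun z => h t x y z) volume 0 1 := fun hh t y =>
    (hh.comp_continuous continuous_const continuous_const continuous_const
      continuous_id).intervalIntegrable _ _
  have h2 : ∀ {h : F4}, Smooth4 h → ∀ t,
      IntervalIntegrable (fun y => ∫ z in (0:ℝ)..1, h t x y z) volume 0 1 := fun hh t =>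
    (hh.continuous_integral_z continuous_const continuous_const
      continuous_id).intervalIntegrable _ _
  have h3 : ∀ {h : F4}, Smooth4 h → IntervalIntegrable
      (fun t => ∫ y in (0:ℝ)..1, ∫ z in (0:ℝ)..1, h t x y z) volume 0 1 := fun hh =>
    (hh.continuous_integral_yz continuous_id continuous_const).intervalIntegrable _ _
  simp only [cubeInt]
  rw [← intervalIntegral.integral_add (h3 hf) (h3 hg)]
  congr 1 with t
  rw [← intervalIntegral.integral_add (h2 hf t) (h2 hg t)]
  congr 1 with y
  rw [← intervalIntegral.integral_add (h1 hf t y) (h1 hg t y)]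

lemma cubeInt_x_mul (φ : ℝ → ℂ) (f : F4) (x : ℝ) :
    cubeInt (fun t x y z => φ x * f t x y z) x = φ x * cubeInt f x := by
  simp only [cubeInt, intervalIntegral.integral_const_mul]

lemma Smooth4.cubeInt_pZ {f : F4} (hf : Smooth4 f)
    (hp : ∀ t x y z, f t x y (z + 1) = f t x y z) (x : ℝ) : cubeInt (_root_.pZ f) x = 0 := by
  have h : ∀ t y, ∫ z in (0:ℝ)..1, _root_.pZ f t x y z = 0 := fun t y => by
    rw [intervalIntegral.integral_eq_sub_of_hasDerivAt (fun z _ => hf.hasDerivAt_pZ t x y z)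
      ((hf.pZ.comp_continuous continuous_const continuous_const continuous_const
        continuous_id).intervalIntegrable _ _)]
    simpa [sub_eq_zero] using hp t x y 0
  simp [cubeInt, h]

lemma Smooth4.cubeInt_pY {f : F4} (hf : Smooth4 f)
    (hp : ∀ t x y z, f t x (y + 1) z = f t x y z) (x : ℝ) : cubeInt (_root_.pY f) x = 0 := by
  have h : ∀ t, ∫ y in (0:ℝ)..1, ∫ z in (0:ℝ)..1, _root_.pY f t x y z = 0 := fun t => by
    rw [intervalIntegral.integral_eq_sub_of_hasDerivAt
      (f := fun y => ∫ z in (0:ℝ)..1, f t x y z)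
      (fun y _ => hasDerivAt_integral_unit
        (hf.comp_continuous continuous_const continuous_const continuous_fst continuous_snd)
        (hf.pY.comp_continuous continuous_const continuous_const continuous_fst continuous_snd)
        (fun y z => hf.hasDerivAt_pY t x y z) y)
      ((hf.pY.continuous_integral_z continuous_const continuous_const
        continuous_id).intervalIntegrable _ _)]
    have : ∀ z, f t x 1 z = f t x 0 z := fun z => by simpa using hp t x 0 z
    simp [this]
  simp [cubeInt, h]

/-! ### Smooth KT-periodic functions -/

/-- The vector field on `KT⁴` given in coordinates by `∂/∂y + x ∂/∂z`. -/
noncomputable def pW (f : F4) (t x y z : ℝ) : ℂ := pY f t x y z + (x : ℂ) * pZ f t x y z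

lemma Smooth4.pW {f : F4} (hf : Smooth4 f) : Smooth4 (pW f) :=
  hf.pY.add (smooth4_x.mul hf.pZ)

lemma KTPeriodic.pX {f : F4} (hper : KTPeriodic f) : KTPeriodic (pX f) := by
  intro t x y z
  refine ⟨?_, ?_, ?_, ?_⟩ <;> simp only [_root_.pX]
  · simp only [(hper _ _ _ _).1]
  · rw [← deriv_comp_add_const]
    simp only [(hper _ _ _ _).2.1]
  · simp only [(hper _ _ _ _).2.2.1]
  · simp only [(hper _ _ _ _).2.2.2]

/-- Differentiating `f(t, x+1, y, z+y) = f(t, x, y, z)` in `y` produces an extra `∂f/∂z`, which the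
coefficient `x` of `∂/∂z` compensates. -/
lemma KTPeriodic.pW {f : F4} (hf : Smooth4 f) (hper : KTPeriodic f) : KTPeriodic (pW f) := by
  intro t x y z
  refine ⟨?_, ?_, ?_, ?_⟩ <;> simp only [_root_.pW]
  · simp only [_root_.pY, _root_.pZ, (hper _ _ _ _).1]
  · have hz : _root_.pZ f t (x + 1) y (z + y) = _root_.pZ f t x y z := by
      simp only [_root_.pZ]
      rw [← deriv_comp_add_const]
      simp only [(hper _ _ _ _).2.1]
    have hy : _root_.pY f t x y z
        = _root_.pY f t (x + 1) y (z + y) + _root_.pZ f t (x + 1) y (z + y) := by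
      have h := (hf.hasDerivAt_comp (hasDerivAt_const y t) (hasDerivAt_const y (x + 1))
        (hasDerivAt_id y) ((hasDerivAt_id y).const_add z)).deriv
      simp only [id, (hper _ _ _ _).2.1] at h
      rw [hf.pY_eq t (x + 1), hf.pZ_eq t (x + 1), ← map_add, _root_.pY, h]
      simp
    rw [hy, hz]
    push_cast
    ring
  · simp only [_root_.pY, _root_.pZ, (hper _ _ _ _).2.2.1]
    rw [← deriv_comp_add_const]
    simp only [(hper _ _ _ _).2.2.1]
  · simp only [_root_.pY, _root_.pZ, (hper _ _ _ _).2.2.2]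
    rw [← deriv_comp_add_const]
    simp only [(hper _ _ _ _).2.2.2]

/-- A smooth KT-periodic function is bounded, since the unit cube meets every orbit. -/
lemma KTPeriodic.exists_bound {f : F4} (hf : Smooth4 f) (hper : KTPeriodic f) :
    ∃ C, ∀ t x y z, ‖f t x y z‖ ≤ C := by
  obtain ⟨C, hC⟩ := ((isCompact_Icc (a := (0:ℝ)) (b := 1)).prod
    ((isCompact_Icc (a := (0:ℝ)) (b := 1)).prod ((isCompact_Icc (a := (0:ℝ)) (b := 1)).prod
    (isCompact_Icc (a := (0:ℝ)) (b := 1))))).exists_bound_of_continuousOn hf.continuous.continuousOn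
  refine ⟨C, fun t x y z => ?_⟩
  have hx : f t x y z = f t (Int.fract x) y (z - ⌊x⌋ * y) := by
    have hp : Function.Periodic (fun s => f t (x + s) y (z + s * y)) 1 := fun s => by
      have := (hper t (x + s) y (z + s * y)).2.1
      simp only [← this]
      congr 1 <;> ring
    have := hp.sub_int_mul_eq (x := 0) ⌊x⌋
    simp only [mul_one, zero_sub, add_zero, zero_mul] at this
    rw [← this, Int.fract]
    congr 1
    ring
  obtain ⟨t', ht', e1⟩ := Function.Periodic.exists_mem_Ico₀
    (f := fun t => f t (Int.fract x) y (z - ⌊x⌋ * y)) (fun t => (hper t _ _ _).1) one_pos t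
  obtain ⟨z', hz', e2⟩ := Function.Periodic.exists_mem_Ico₀
    (f := fun z => f t' (Int.fract x) y z) (fun z => (hper _ _ _ z).2.2.2) one_pos (z - ⌊x⌋ * y)
  obtain ⟨y', hy', e3⟩ := Function.Periodic.exists_mem_Ico₀
    (f := fun y => f t' (Int.fract x) y z') (fun y => (hper _ _ y _).2.2.1) one_pos y
  rw [hx, e1, e2, e3]
  exact hC (t', Int.fract x, y', z') ⟨Set.Ico_subset_Icc_self ht',
    ⟨Int.fract_nonneg x, (Int.fract_lt_one x).le⟩, Set.Ico_subset_Icc_self hy',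
    Set.Ico_subset_Icc_self hz'⟩

/-! ### Partial Fourier coefficients -/

/-- The character `e^{−2πi(kt + my + nz)}`, regarded as a function of `(t, x, y, z)`. -/
noncomputable def character (k m n : ℤ) (t _x y z : ℝ) : ℂ :=
  Complex.exp (-(2 * (Real.pi : ℂ) * Complex.I) *
    ((k : ℂ) * (t : ℂ) + (m : ℂ) * (y : ℂ) + (n : ℂ) * (z : ℂ)))

lemma smooth4_character (k m n : ℤ) : Smooth4 (character k m n) := by
  have h : ∀ {g : ℝ × ℝ × ℝ × ℝ → ℝ}, ContDiff ℝ (⊤ : ℕ∞) g →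
      ContDiff ℝ (⊤ : ℕ∞) fun p => ((g p : ℝ) : ℂ) := fun hg => Complex.ofRealCLM.contDiff.comp hg
  refine ContDiff.cexp (contDiff_const.mul (((contDiff_const.mul (h ?_)).add
    (contDiff_const.mul (h ?_))).add (contDiff_const.mul (h ?_)))) <;> fun_prop

lemma norm_character (k m n : ℤ) (t x y z : ℝ) : ‖character k m n t x y z‖ = 1 := by
  have : -(2 * (Real.pi : ℂ) * Complex.I) *
      ((k : ℂ) * (t : ℂ) + (m : ℂ) * (y : ℂ) + (n : ℂ) * (z : ℂ)) =
      ((-(2 * Real.pi) * (k * t + m * y + n * z) : ℝ) : ℂ) * Complex.I := by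
    push_cast; ring
  rw [character, this, Complex.norm_exp_ofReal_mul_I]

lemma character_add_one_y (k m n : ℤ) (t x y z : ℝ) :
    character k m n t x (y + 1) z = character k m n t x y z := by
  rw [character, character, Complex.exp_eq_exp_iff_exists_int]
  exact ⟨-m, by push_cast; ring⟩

lemma character_add_one_z (k m n : ℤ) (t x y z : ℝ) :
    character k m n t x y (z + 1) = character k m n t x y z := by
  rw [character, character, Complex.exp_eq_exp_iff_exists_int]
  exact ⟨-n, by push_cast; ring⟩

/-- The partial Fourier coefficient `f_{k,m,n}`. -/
noncomputable def coeff (k m n : ℤ) (f : F4) : ℝ → ℂ :=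
  cubeInt fun t x y z => f t x y z * character k m n t x y z

lemma hasDerivAt_character_y (k m n : ℤ) (t x y z : ℝ) :
    HasDerivAt (fun y => character k m n t x y z)
      (-(2 * Real.pi * Complex.I * m) * character k m n t x y z) y := by
  have h := (((((hasDerivAt_id y).ofReal_comp.const_mul (m : ℂ)).const_add
    ((k : ℂ) * (t : ℂ))).add_const ((n : ℂ) * (z : ℂ))).const_mul
    (-(2 * (Real.pi : ℂ) * Complex.I))).cexp
  refine h.congr_deriv ?_
  simp only [character, id_eq, Complex.ofReal_one]
  ring

lemma hasDerivAt_character_z (k m n : ℤ) (t x y z : ℝ) :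
    HasDerivAt (fun z => character k m n t x y z)
      (-(2 * Real.pi * Complex.I * n) * character k m n t x y z) z := by
  have h := ((((hasDerivAt_id z).ofReal_comp.const_mul (n : ℂ)).const_add
    ((k : ℂ) * (t : ℂ) + (m : ℂ) * (y : ℂ))).const_mul
    (-(2 * (Real.pi : ℂ) * Complex.I))).cexp
  refine h.congr_deriv ?_
  simp only [character, id_eq, Complex.ofReal_one]
  ring

lemma hasDerivAt_coeff {f : F4} (hf : Smooth4 f) (k m n : ℤ) (x : ℝ) :
    HasDerivAt (coeff k m n f) (coeff k m n (pX f) x) x := by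
  have h := (hf.mul (smooth4_character k m n)).hasDerivAt_cubeInt x
  refine h.congr_deriv (congrArg (cubeInt · x) ?_)
  funext t x y z
  -- the character does not depend on `x`, so it can be evaluated at `x = 0`
  exact ((hf.hasDerivAt_pX t x y z).mul_const (character k m n t 0 y z)).deriv

lemma iteratedDeriv_coeff {f : F4} (hf : Smooth4 f) (k m n : ℤ) (j : ℕ) :
    iteratedDeriv j (coeff k m n f) = coeff k m n (pX^[j] f) := by
  induction j generalizing f with
  | zero => simp
  | succ j ih =>
    rw [iteratedDeriv_succ', funext fun x => (hasDerivAt_coeff hf k m n x).deriv, ih hf.pX]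
    rfl

/-- Integration by parts: `∂/∂y + x ∂/∂z` acts on the coefficient as multiplication by
`2πi(m + nx)`. -/
lemma coeff_pW {f : F4} (hf : Smooth4 f) (hper : KTPeriodic f) (k m n : ℤ) (x : ℝ) :
    coeff k m n (pW f) x = 2 * Real.pi * Complex.I * (m + n * x) * coeff k m n f x := by
  set g : F4 := fun t x y z => f t x y z * character k m n t x y z with hg
  have hgs : Smooth4 g := hf.mul (smooth4_character k m n)
  have hy : ∀ t x y z, pY g t x y z = pY f t x y z * character k m n t x y z +
      f t x y z * (-(2 * Real.pi * Complex.I * m) * character k m n t x y z) := fun t x y z =>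
    ((hf.hasDerivAt_pY t x y z).mul (hasDerivAt_character_y k m n t x y z)).deriv
  have hz : ∀ t x y z, pZ g t x y z = pZ f t x y z * character k m n t x y z +
      f t x y z * (-(2 * Real.pi * Complex.I * n) * character k m n t x y z) := fun t x y z =>
    ((hf.hasDerivAt_pZ t x y z).mul (hasDerivAt_character_z k m n t x y z)).deriv
  have hsplit : (fun t x y z => pW f t x y z * character k m n t x y z) =
      fun t x y z => (pY g t x y z + (x : ℂ) * pZ g t x y z) +
        (2 * Real.pi * Complex.I * (m + n * x)) * g t x y z := by
    ext t x y z
    rw [hy, hz, pW, hg]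
    ring
  have hlin : Smooth4 fun _ x _ _ => 2 * Real.pi * Complex.I * (m + n * (x : ℂ)) :=
    (smooth4_const _).mul ((smooth4_const _).add ((smooth4_const _).mul smooth4_x))
  rw [coeff, hsplit, (hgs.pY.add (smooth4_x.mul hgs.pZ)).cubeInt_add (hlin.mul hgs),
    hgs.pY.cubeInt_add (smooth4_x.mul hgs.pZ), cubeInt_x_mul (fun x => (x : ℂ)),
    cubeInt_x_mul (fun x => 2 * Real.pi * Complex.I * (m + n * (x : ℂ))),
    hgs.cubeInt_pY fun t x y z => by
      simp only [hg, (hper _ _ _ _).2.2.1, character_add_one_y],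
    hgs.cubeInt_pZ fun t x y z => by
      simp only [hg, (hper _ _ _ _).2.2.2, character_add_one_z]]
  simp [coeff, hg]

lemma exists_bound_coeff {f : F4} (hf : Smooth4 f) (hper : KTPeriodic f) (k m n : ℤ) :
    ∃ C, ∀ x, ‖coeff k m n f x‖ ≤ C := by
  obtain ⟨C, hC⟩ := hper.exists_bound hf
  refine ⟨C, fun x => ?_⟩
  have key : ∀ {u : ℝ → ℂ}, (∀ s, ‖u s‖ ≤ C) → ‖∫ s in (0:ℝ)..1, u s‖ ≤ C := fun hu => by
    simpa using intervalIntegral.norm_integral_le_of_norm_le_const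
      (a := (0:ℝ)) (b := 1) (C := C) fun s _ => hu s
  exact key fun t => key fun y => key fun z => by
    rw [norm_mul, norm_character, mul_one]; exact hC t x y z

/-- Powers of `m + nx` are absorbed by iterating `∂/∂y + x ∂/∂z`, which preserves smooth
KT-periodic functions. -/
lemma exists_bound_pow_mul_coeff {f : F4} (hf : Smooth4 f) (hper : KTPeriodic f) (k m n : ℤ)
    (p : ℕ) : ∃ C, ∀ x : ℝ, |m + n * x| ^ p * ‖coeff k m n f x‖ ≤ C := by
  induction p generalizing f with
  | zero => simpa using exists_bound_coeff hf hper k m n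
  | succ p ih =>
    obtain ⟨C, hC⟩ := ih hf.pW (hper.pW hf)
    refine ⟨C, fun x => le_trans ?_ (hC x)⟩
    have hnorm : ‖(m + n * x : ℂ)‖ = |m + n * x| := by
      rw [← Real.norm_eq_abs, ← Complex.norm_real]; push_cast; rfl
    have h1 : (1 : ℝ) ≤ 2 * Real.pi := by linarith [Real.pi_gt_three]
    have hpi : ‖coeff k m n (pW f) x‖ = 2 * Real.pi * (|m + n * x| * ‖coeff k m n f x‖) := by
      rw [coeff_pW hf hper, norm_mul, norm_mul, hnorm]
      simp [abs_of_pos Real.pi_pos]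
      ring
    rw [hpi, pow_succ, mul_assoc]
    exact mul_le_mul_of_nonneg_left (le_mul_of_one_le_left (by positivity) h1) (by positivity)

lemma exists_decay_coeff {f : F4} (hf : Smooth4 f) (hper : KTPeriodic f) (k m n : ℤ)
    (hn : n ≠ 0) (p : ℕ) : ∃ C, ∀ x : ℝ, |x| ^ p * ‖coeff k m n f x‖ ≤ C := by
  obtain ⟨A, hA⟩ := exists_bound_pow_mul_coeff hf hper k m n p
  obtain ⟨B, hB⟩ := exists_bound_coeff hf hper k m n
  refine ⟨2 ^ (p - 1) * (A + |(m : ℝ)| ^ p * B), fun x => ?_⟩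
  have hn1 : (1 : ℝ) ≤ |(n : ℝ)| := by exact_mod_cast Int.one_le_abs hn
  have hx : |x| ≤ |m + n * x| + |(m : ℝ)| :=
    calc |x| ≤ |(n : ℝ)| * |x| := le_mul_of_one_le_left (abs_nonneg x) hn1
      _ = |(m + n * x) - m| := by rw [← abs_mul]; ring_nf
      _ ≤ _ := abs_sub _ _
  calc |x| ^ p * ‖coeff k m n f x‖
      ≤ (2 ^ (p - 1) * (|m + n * x| ^ p + |(m : ℝ)| ^ p)) * ‖coeff k m n f x‖ := by
        gcongr
        exact (pow_le_pow_left₀ (abs_nonneg x) hx p).trans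
          (add_pow_le (abs_nonneg _) (abs_nonneg _) p)
    _ = 2 ^ (p - 1) * (|m + n * x| ^ p * ‖coeff k m n f x‖ +
          |(m : ℝ)| ^ p * ‖coeff k m n f x‖) := by ring
    _ ≤ _ := by gcongr; exacts [hA x, hB x]

/-- for a smooth KT-periodic `f` and integers `k, m, n` with `n ≠ 0`, the
partial Fourier coefficient
`f_{k,m,n}(x) = ∫₀¹∫₀¹∫₀¹ f(t,x,y,z)·e^{−2πi(kt+my+nz)} dt dy dz` is a Schwartz function. -/
theorem partial_fourier_coefficient_schwartz
    (f : F4) (hf : Smooth4 f) (hper : KTPeriodic f) (k m n : ℤ) (hn : n ≠ 0) :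
    ∃ φ : SchwartzMap ℝ ℂ, ∀ x : ℝ,
      φ x = ∫ t in (0:ℝ)..1, ∫ y in (0:ℝ)..1, ∫ z in (0:ℝ)..1,
        f t x y z *
          Complex.exp (-(2 * (Real.pi : ℂ) * Complex.I) *
            ((k : ℂ) * (t : ℂ) + (m : ℂ) * (y : ℂ) + (n : ℂ) * (z : ℂ))) := by
  have hiter : ∀ j : ℕ, Smooth4 (pX^[j] f) ∧ KTPeriodic (pX^[j] f) := fun j => by
    induction j with
    | zero => exact ⟨hf, hper⟩
    | succ j ih =>
      rw [Function.iterate_succ_apply']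
      exact ⟨ih.1.pX, ih.2.pX⟩
  refine ⟨⟨coeff k m n f, ?_, fun p j => ?_⟩, fun x => rfl⟩
  · refine contDiff_of_differentiable_iteratedDeriv fun j _ x => ?_
    rw [iteratedDeriv_coeff hf]
    exact (hasDerivAt_coeff (hiter j).1 k m n x).differentiableAt
  · obtain ⟨C, hC⟩ := exists_decay_coeff (hiter j).1 (hiter j).2 k m n hn p
    refine ⟨C, fun x => ?_⟩
    rw [norm_iteratedFDeriv_eq_norm_iteratedDeriv, iteratedDeriv_coeff hf, Real.norm_eq_abs]
    exact hC x
end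

section
/- Let p₀, p₁, p₂, q₀, q₁, q₂ ∈ ℂ and set P(s) = p₂s² + p₁s + p₀ and Q(s) = q₂s² + q₁s + q₀. Let c ∈ ℂ, r > 0, and let φ be a holomorphic function on an open set U ⊆ ℂ containing the circle {s : |s − c| = r}, satisfying (P·φ)′(s) = Q(s)·φ(s) on U. Then the function h : ℝ → ℂ defined by the contour integral h(x) = ∮_{|s−c|=r} φ(s)·e^{sx} ds satisfies the second-order ODE (p₂x + q₂)·h″(x) + (p₁x + q₁)·h′(x) + (p₀x + q₀)·h(x) = 0 for every x ∈ ℝ. -/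
/-!
Differentiation under the integral sign (`hasDerivAt_circleIntegral_mul_exp`) multiplies the density
`φ(s)` by `s`, so the left side of the equation is `∮ (Q(s) + x P(s)) φ(s) e^{sx} ds`. Since
`(Pφ)′ = Qφ`, this integrand is the `s`-derivative of `P(s) φ(s) e^{sx}`, a single-valued function
near the circle, so its integral around the circle vanishes.
-/

open Complex

noncomputable section

lemma hasDerivAt_circleIntegral_mul_exp {c : ℂ} {r : ℝ} (hr : 0 ≤ r) {g : ℂ → ℂ}
    (hg : ContinuousOn g (Metric.sphere c r)) (x : ℝ) :
    HasDerivAt (fun y : ℝ => ∮ s in C(c, r), g s * Complex.exp (s * (y : ℂ)))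
      (∮ s in C(c, r), (s * g s) * Complex.exp (s * (x : ℂ))) x := by
  have hgc : Continuous fun t => g (circleMap c r t) :=
    hg.comp_continuous (continuous_circleMap c r) fun t => circleMap_mem_sphere c hr t
  have hz : Continuous (circleMap c r) := continuous_circleMap c r
  have hd : Continuous (deriv (circleMap c r)) := by
    have : deriv (circleMap c r) = fun t => circleMap 0 r t * I := by
      ext t; exact deriv_circleMap c r t
    rw [this]
    exact (continuous_circleMap 0 r).mul continuous_const
  simp only [circleIntegral]
  generalize deriv (circleMap c r) = D at hd ⊢
  -- On the unit ball around `x`, `|e^{sy}| ≤ e^{|s|(|x|+1)}`, which gives the dominating function.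
  refine (intervalIntegral.hasDerivAt_integral_of_dominated_loc_of_deriv_le
    (F := fun (y : ℝ) t => D t •
      (g (circleMap c r t) * Complex.exp (circleMap c r t * (y : ℂ))))
    (F' := fun (y : ℝ) t => D t •
      ((circleMap c r t * g (circleMap c r t)) * Complex.exp (circleMap c r t * (y : ℂ))))
    (bound := fun t => ‖D t‖ * (‖circleMap c r t * g (circleMap c r t)‖ *
      Real.exp (‖circleMap c r t‖ * (|x| + 1))))
    (Metric.ball_mem_nhds x one_pos) ?_ ?_ ?_ ?_ ?_ ?_).2
  · exact .of_forall fun y => Continuous.aestronglyMeasurable (hd.smul (hgc.mul (by fun_prop)))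
  · exact Continuous.intervalIntegrable (hd.smul (hgc.mul (by fun_prop))) _ _
  · exact Continuous.aestronglyMeasurable (hd.smul ((hz.mul hgc).mul (by fun_prop)))
  · refine .of_forall fun t _ y hy => ?_
    rw [norm_smul, norm_mul _ (Complex.exp _)]
    gcongr
    refine (Complex.norm_exp_le_exp_norm _).trans ?_
    rw [norm_mul, Complex.norm_real, Real.norm_eq_abs]
    gcongr
    rw [Metric.mem_ball, Real.dist_eq] at hy
    have := abs_sub_abs_le_abs_sub y x
    linarith
  · exact Continuous.intervalIntegrable (hd.norm.mul ((hz.mul hgc).norm.mul (by fun_prop))) _ _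
  · refine .of_forall fun t _ y _ => ?_
    have h1 : HasDerivAt (fun y : ℝ => circleMap c r t * (y : ℂ)) (circleMap c r t) y := by
      simpa using (Complex.ofRealCLM.hasDerivAt (x := y)).const_mul (circleMap c r t)
    have h2 := (h1.cexp.const_mul (g (circleMap c r t))).const_mul (D t)
    simp only [smul_eq_mul]
    exact h2.congr_deriv (by ring)

/-- Laplace integral transform method: if `φ` is holomorphic on an open
set containing the circle `|s − c| = r` and satisfies `(P·φ)′ = Q·φ` there, where
`P(s) = p₂s² + p₁s + p₀` and `Q(s) = q₂s² + q₁s + q₀`, then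
`h(x) = ∮_{|s−c|=r} φ(s)e^{sx} ds` solves
`(p₂x + q₂)h″ + (p₁x + q₁)h′ + (p₀x + q₀)h = 0` on `ℝ`. -/
theorem contour_integral_solves_ode
    (p₀ p₁ p₂ q₀ q₁ q₂ : ℂ) (c : ℂ) (r : ℝ) (hr : 0 < r)
    (U : Set ℂ) (hU : IsOpen U) (hsub : Metric.sphere c r ⊆ U)
    (φ : ℂ → ℂ) (hφ : DifferentiableOn ℂ φ U)
    (hPQ : ∀ s ∈ U,
      HasDerivAt (fun z => (p₂ * z ^ 2 + p₁ * z + p₀) * φ z)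
        ((q₂ * s ^ 2 + q₁ * s + q₀) * φ s) s) :
    let h : ℝ → ℂ := fun x => ∮ s in C(c, r), φ s * Complex.exp (s * (x : ℂ))
    ∀ x : ℝ,
      (p₂ * (x : ℂ) + q₂) * deriv (deriv h) x +
        (p₁ * (x : ℂ) + q₁) * deriv h x +
        (p₀ * (x : ℂ) + q₀) * h x = 0 := by
  intro h x
  have c0 : ContinuousOn φ (Metric.sphere c r) := hφ.continuousOn.mono hsub
  have c1 : ContinuousOn (fun s => s * φ s) (Metric.sphere c r) := continuousOn_id.mul c0
  have c2 : ContinuousOn (fun s => s * (s * φ s)) (Metric.sphere c r) := continuousOn_id.mul c1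
  have hd1 : deriv h = fun x : ℝ => ∮ s in C(c, r), (s * φ s) * Complex.exp (s * (x : ℂ)) :=
    funext fun y => (hasDerivAt_circleIntegral_mul_exp hr.le c0 y).deriv
  have hd2 : deriv (deriv h) x =
      ∮ s in C(c, r), (s * (s * φ s)) * Complex.exp (s * (x : ℂ)) := by
    rw [hd1]
    exact (hasDerivAt_circleIntegral_mul_exp hr.le c1 x).deriv
  have ce : ContinuousOn (fun s : ℂ => Complex.exp (s * (x : ℂ))) (Metric.sphere c r) := by
    fun_prop
  have key : (∮ s in C(c, r),
      ((p₂ * (x : ℂ) + q₂) * ((s * (s * φ s)) * Complex.exp (s * (x : ℂ))) +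
        (p₁ * (x : ℂ) + q₁) * ((s * φ s) * Complex.exp (s * (x : ℂ)))) +
        (p₀ * (x : ℂ) + q₀) * (φ s * Complex.exp (s * (x : ℂ)))) = 0 := by
    refine circleIntegral.integral_eq_zero_of_hasDerivWithinAt hr.le
      (f := fun s => ((p₂ * s ^ 2 + p₁ * s + p₀) * φ s) * Complex.exp (s * (x : ℂ)))
      fun s hs => ?_
    have he : HasDerivAt (fun s : ℂ => Complex.exp (s * (x : ℂ)))
        (Complex.exp (s * (x : ℂ)) * (x : ℂ)) s := (hasDerivAt_mul_const (x : ℂ)).cexp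
    exact (((hPQ s (hsub hs)).mul he).congr_deriv (by ring)).hasDerivWithinAt
  have int {g : ℂ → ℂ} (hg : ContinuousOn g (Metric.sphere c r)) (a : ℂ) :
      CircleIntegrable (fun s => a * (g s * Complex.exp (s * (x : ℂ)))) c r :=
    (continuousOn_const.mul (hg.mul ce)).circleIntegrable hr.le
  have i2 := int c2 (p₂ * (x : ℂ) + q₂)
  have i1 := int c1 (p₁ * (x : ℂ) + q₁)
  have i0 := int c0 (p₀ * (x : ℂ) + q₀)
  rw [circleIntegral.integral_add (i2.fun_add i1) i0, circleIntegral.integral_add i2 i1,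
    circleIntegral.integral_const_mul, circleIntegral.integral_const_mul,
    circleIntegral.integral_const_mul] at key
  rw [hd2, hd1]
  exact key

end
end

section
/- Let b ∈ ℝ. The ℂ-vector space of smooth functions f : ℝ² → ℂ, doubly periodic (f(t+1,x) = f(t,x) = f(t,x+1)), satisfying ∂f/∂t + i·∂f/∂x + (b/2)·f = 0 at every point, has dimension 1 if b ∈ 4πℤ and dimension 0 otherwise. Moreover, when b = 4πl with l ∈ ℤ, the solutions are exactly the functions f(t,x) = C·e^{2πi l x} with C ∈ ℂ. -/
/-!
The gauge factor `e^{-i(b/2)x}` removes the zeroth-order term: if `f` solves the equation, then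
`g(t,x) = f(t,x) e^{-i(b/2)x}` satisfies `∂g/∂t + i ∂g/∂x = 0`, so `g` is an entire function of
`z = t + ix` (`differentiable_gauged`). Since `b` is real, `|g| = |f|`, which is bounded by double
periodicity (`bounded_of_periodic`). Liouville's theorem makes `g` constant, so
`f(t,x) = C e^{i(b/2)x}` (`eq_exp_of_mem`). Periodicity in `x` then forces `C = 0` or
`e^{ib/2} = 1`, the latter meaning `b ∈ 4πℤ`.
-/

open Complex

noncomputable section

/-- The space of smooth doubly periodic functions `f : ℝ² → ℂ` satisfying
`∂f/∂t + i·∂f/∂x + (b/2)·f = 0`. -/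
def Sol2D (b : ℝ) : Set (ℝ → ℝ → ℂ) :=
  {f | ContDiff ℝ (⊤ : ℕ∞) (fun p : ℝ × ℝ => f p.1 p.2) ∧
    (∀ t x : ℝ, f (t + 1) x = f t x ∧ f t (x + 1) = f t x) ∧
    (∀ t x : ℝ,
      deriv (fun s => f s x) t + Complex.I * deriv (fun s => f t s) x +
        ((b : ℂ) / 2) * f t x = 0)}

/-- The solution `f` multiplied by the unimodular factor `e^{-i(b/2)x}`, as a function of
`z = t + ix`. -/
def gauged (b : ℝ) (f : ℝ → ℝ → ℂ) (z : ℂ) : ℂ :=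
  f z.re z.im * Complex.exp (-(Complex.I * (b / 2)) * (z.im : ℂ))

lemma differentiable_gauged {b : ℝ} {f : ℝ → ℝ → ℂ} (hf : f ∈ Sol2D b) :
    Differentiable ℂ (gauged b f) := by
  obtain ⟨hs, -, he⟩ := hf
  intro z
  have hF : HasFDerivAt (fun p : ℝ × ℝ => f p.1 p.2)
      (fderiv ℝ (fun p : ℝ × ℝ => f p.1 p.2) (z.re, z.im)) (z.re, z.im) :=
    ((hs.differentiable (by simp)) _).hasFDerivAt
  set D := fderiv ℝ (fun p : ℝ × ℝ => f p.1 p.2) (z.re, z.im)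
  have ht : deriv (fun s => f s z.im) z.re = D (1, 0) :=
    (hF.comp_hasDerivAt (f := fun s : ℝ => (s, z.im)) z.re
      ((hasDerivAt_id _).prodMk (hasDerivAt_const _ _))).deriv
  have hx : deriv (fun s => f z.re s) z.im = D (0, 1) :=
    (hF.comp_hasDerivAt (f := fun s : ℝ => (z.re, s)) z.im
      ((hasDerivAt_const _ _).prodMk (hasDerivAt_id _))).deriv
  have h1 : HasFDerivAt (fun w : ℂ => f w.re w.im) (D.comp (reCLM.prod imCLM)) z :=
    hF.comp (f := fun w : ℂ => (w.re, w.im)) z (reCLM.prod imCLM).hasFDerivAt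
  have h2 : HasFDerivAt (fun w : ℂ => -(Complex.I * (b / 2)) * (w.im : ℂ))
      ((-(Complex.I * (b / 2))) • ofRealCLM.comp imCLM) z :=
    ((ofRealCLM.comp imCLM).hasFDerivAt (x := z)).const_mul _
  have h3 := h1.mul h2.cexp
  have heq := he z.re z.im
  rw [ht, hx] at heq
  refine differentiableAt_complex_iff_differentiableAt_real.2 ⟨h3.differentiableAt, ?_⟩
  have h4 : fderiv ℝ (gauged b f) z = _ := h3.fderiv
  rw [h4]
  simp [-neg_mul]
  -- The Cauchy–Riemann equation is `-i e^{-i(b/2)x}` times the equation for `f`.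
  linear_combination (-I * Complex.exp (-(Complex.I * (b / 2)) * (z.im : ℂ))) * heq +
    D (0, 1) * Complex.exp (-(Complex.I * (b / 2)) * (z.im : ℂ)) * I_sq

lemma bounded_of_periodic {f : ℝ → ℝ → ℂ} (hc : Continuous fun p : ℝ × ℝ => f p.1 p.2)
    (hp : ∀ t x : ℝ, f (t + 1) x = f t x ∧ f t (x + 1) = f t x) :
    ∃ M : ℝ, ∀ t x, ‖f t x‖ ≤ M := by
  obtain ⟨M, hM⟩ := (isCompact_Icc (a := (0 : ℝ)) (b := 1)).prod
    (isCompact_Icc (a := (0 : ℝ)) (b := 1)) |>.exists_bound_of_continuousOn hc.continuousOn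
  refine ⟨M, fun t x => ?_⟩
  have p1 : Function.Periodic (fun t => f t x) 1 := fun t => (hp t x).1
  obtain ⟨t', ht', e1⟩ := p1.exists_mem_Ico₀ one_pos t
  have p2 : Function.Periodic (fun x => f t' x) 1 := fun x => (hp t' x).2
  obtain ⟨x', hx', e2⟩ := p2.exists_mem_Ico₀ one_pos x
  have := hM (t', x') ⟨Set.Ico_subset_Icc_self ht', Set.Ico_subset_Icc_self hx'⟩
  rw [e1, e2]
  exact this

lemma eq_exp_of_mem {b : ℝ} {f : ℝ → ℝ → ℂ} (hf : f ∈ Sol2D b) :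
    ∃ C : ℂ, ∀ t x : ℝ, f t x = C * Complex.exp (Complex.I * (b / 2) * (x : ℂ)) := by
  obtain ⟨M, hM⟩ := bounded_of_periodic hf.1.continuous hf.2.1
  have hb : Bornology.IsBounded (Set.range (gauged b f)) := by
    refine isBounded_iff_forall_norm_le.2 ⟨M, ?_⟩
    rintro _ ⟨z, rfl⟩
    have : ‖Complex.exp (-(Complex.I * (b / 2)) * (z.im : ℂ))‖ = 1 := by
      rw [Complex.norm_exp]; simp
    rw [gauged, norm_mul, this, mul_one]
    exact hM _ _
  obtain ⟨C, hC⟩ := (differentiable_gauged hf).exists_const_forall_eq_of_bounded hb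
  refine ⟨C, fun t x => ?_⟩
  rw [← hC ⟨t, x⟩, gauged, mul_assoc, ← Complex.exp_add]
  simp

lemma exp_mem (l : ℤ) (C : ℂ) :
    (fun (_t x : ℝ) => C * Complex.exp (2 * (Real.pi : ℂ) * Complex.I * (l : ℂ) * (x : ℂ))) ∈
      Sol2D (4 * Real.pi * (l : ℝ)) := by
  refine ⟨?_, fun t x => ⟨rfl, ?_⟩, fun t x => ?_⟩
  · have : ContDiff ℝ (⊤ : ℕ∞) (fun p : ℝ × ℝ => (p.2 : ℂ)) :=
      ofRealCLM.contDiff.comp contDiff_snd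
    exact contDiff_const.mul (contDiff_const.mul this).cexp
  · have : 2 * (Real.pi : ℂ) * Complex.I * (l : ℂ) * ((x + 1 : ℝ) : ℂ) =
        2 * (Real.pi : ℂ) * Complex.I * (l : ℂ) * (x : ℂ) + l * (2 * Real.pi * Complex.I) := by
      push_cast; ring
    simp only [this, Complex.exp_add, Complex.exp_int_mul_two_pi_mul_I, mul_one]
  · have h : HasDerivAt (fun s : ℝ =>
        C * Complex.exp (2 * (Real.pi : ℂ) * Complex.I * (l : ℂ) * (s : ℂ))) _ x :=
      (((hasDerivAt_id x).ofReal_comp.const_mul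
        (2 * (Real.pi : ℂ) * Complex.I * (l : ℂ))).cexp).const_mul C
    rw [h.deriv, deriv_const]
    simp only [id]
    push_cast
    linear_combination (2 * Real.pi * l * C *
      Complex.exp (2 * (Real.pi : ℂ) * Complex.I * (l : ℂ) * (x : ℂ))) * I_sq

lemma sol_eq (l : ℤ) :
    Sol2D (4 * Real.pi * (l : ℝ)) = {f | ∃ C : ℂ, f = fun (_t x : ℝ) =>
        C * Complex.exp (2 * (Real.pi : ℂ) * Complex.I * (l : ℂ) * (x : ℂ))} := by
  ext f
  constructor
  · intro hf
    obtain ⟨C, hC⟩ := eq_exp_of_mem hf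
    refine ⟨C, funext₂ fun t x => ?_⟩
    rw [hC]
    congr 2
    push_cast
    ring
  · rintro ⟨C, rfl⟩
    exact exp_mem l C

lemma eq_zero_of_mem {b : ℝ} (hb : ¬ ∃ l : ℤ, b = 4 * Real.pi * (l : ℝ)) {f : ℝ → ℝ → ℂ}
    (hf : f ∈ Sol2D b) : f = 0 := by
  obtain ⟨C, hC⟩ := eq_exp_of_mem hf
  have h := (hf.2.1 0 0).2
  rw [hC, hC] at h
  by_cases hC0 : C = 0
  · funext t x
    simp [hC, hC0]
  · refine absurd ?_ hb
    have h1 : Complex.exp (Complex.I * (b / 2)) = 1 := by simpa [hC0] using h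
    obtain ⟨n, hn⟩ := Complex.exp_eq_one_iff.1 h1
    refine ⟨n, ?_⟩
    have : (b : ℂ) = 4 * Real.pi * n := by
      apply mul_left_cancel₀ I_ne_zero
      linear_combination 2 * hn
    exact_mod_cast this

/-- the space of smooth doubly periodic solutions of
`∂f/∂t + i∂f/∂x + (b/2)f = 0` has dimension `1` if `b ∈ 4πℤ`, and `0` otherwise; when
`b = 4πl`, `l ∈ ℤ`, the solutions are exactly the functions `C·e^{2πilx}`. -/
theorem solutions_on_base_torus (b : ℝ) :
    ((∃ l : ℤ, b = 4 * Real.pi * (l : ℝ)) → HasDimOver (Sol2D b) 1) ∧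
    (¬ (∃ l : ℤ, b = 4 * Real.pi * (l : ℝ)) → HasDimOver (Sol2D b) 0) ∧
    (∀ l : ℤ, b = 4 * Real.pi * (l : ℝ) →
      Sol2D b = {f | ∃ C : ℂ, f = fun (_t x : ℝ) =>
        C * Complex.exp (2 * (Real.pi : ℂ) * Complex.I * (l : ℂ) * (x : ℂ))}) := by
  refine ⟨?_, fun hb => ?_, ?_⟩
  · rintro ⟨l, rfl⟩
    refine ⟨fun _ => fun (_t x : ℝ) =>
      Complex.exp (2 * (Real.pi : ℂ) * Complex.I * (l : ℂ) * (x : ℂ)), ?_, ?_⟩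
    · refine LinearIndependent.of_subsingleton 0 fun h => ?_
      simpa using congrFun (congrFun h 0) 0
    · rw [sol_eq]
      ext f
      simp only [Set.range_const, SetLike.mem_coe, Submodule.mem_span_singleton, Set.mem_ofPred_eq]
      exact exists_congr fun C => eq_comm
  · refine ⟨Fin.elim0, linearIndependent_empty_type, ?_⟩
    ext f
    simp only [Set.range_eq_empty, Submodule.span_empty, Submodule.bot_coe, Set.mem_singleton_iff]
    refine ⟨?_, eq_zero_of_mem hb⟩
    rintro rfl
    exact ⟨contDiff_const, fun _ _ => ⟨rfl, rfl⟩, fun _ _ => by simp⟩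
  · rintro l rfl
    exact sol_eq l

end
end
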